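/- Let n be a positive integer such that p = 2n + 1 is prime. Then the map c : K_n → ℤ/pℤ given by c(m) = m² mod p is an n-satisfactory coloring of K_n: c attains exactly n distinct values on K_n, and for every a ∈ K_n and all integers i, j with 1 ≤ i < j ≤ n, (ia)² ≢ (ja)² (mod p). -/

import Mathlib

/-- The `n`-core: the set of `n`-smooth positive integers. -/
def Kcore (n : ℕ) : Set ℕ := {m : ℕ | 0 < m ∧ ∀ p : ℕ, p.Prime → p ∣ m → p ≤ n}

/-!
Every residue modulo `p` is, up to sign, a unique `i ≤ p / 2`, and for `p` prime two residues have
the same square exactly when they agree up to sign. So `1, …, p / 2` represent each nonzero square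
exactly once. If `n < p`, no element of `K_n` is divisible by `p`, so its elements are units modulo
`p`: their squares are nonzero, and multiplying by one of them preserves distinctness.
-/

section SquaresModP

variable {p : ℕ}

theorem natCast_natAbs_valMinAbs_sq (x : ZMod p) :
    (x.valMinAbs.natAbs : ZMod p) ^ 2 = x ^ 2 := by
  have hsq : (x.valMinAbs.natAbs : ℤ) ^ 2 = x.valMinAbs ^ 2 := Int.natAbs_sq _
  rw [← Int.cast_natCast, ← Int.cast_pow, hsq, Int.cast_pow, ZMod.coe_valMinAbs]

theorem injOn_natCast_sq_Iic_half [Fact p.Prime] :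
    Set.InjOn (fun i : ℕ ↦ (i : ZMod p) ^ 2) (Set.Iic (p / 2)) := by
  intro i hi j hj hsq
  have heq_or_neg : (i : ZMod p) = j ∨ (i : ZMod p) = -j := sq_eq_sq_iff_eq_or_eq_neg.mp hsq
  simpa only [← ZMod.natAbs_valMinAbs_eq_natAbs_valMinAbs, ZMod.valMinAbs_natCast_of_le_half hi,
    ZMod.valMinAbs_natCast_of_le_half hj, Int.natAbs_natCast] using heq_or_neg

theorem image_natCast_sq_eq_image_Icc_half [NeZero p] {S : Set ℕ}
    (hIcc : Set.Icc 1 (p / 2) ⊆ S) (hS : ∀ m ∈ S, (m : ZMod p) ≠ 0) :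
    (fun m : ℕ ↦ (m : ZMod p) ^ 2) '' S = (fun m : ℕ ↦ (m : ZMod p) ^ 2) '' Set.Icc 1 (p / 2) := by
  refine Set.Subset.antisymm ?_ (Set.image_mono hIcc)
  rintro _ ⟨m, hm, rfl⟩
  refine ⟨(m : ZMod p).valMinAbs.natAbs, ⟨?_, ZMod.natAbs_valMinAbs_le _⟩,
    natCast_natAbs_valMinAbs_sq _⟩
  rw [Nat.one_le_iff_ne_zero, Int.natAbs_ne_zero, Ne, ZMod.valMinAbs_eq_zero]
  exact hS m hm

theorem ncard_image_natCast_sq [Fact p.Prime] {S : Set ℕ}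
    (hIcc : Set.Icc 1 (p / 2) ⊆ S) (hS : ∀ m ∈ S, (m : ZMod p) ≠ 0) :
    ((fun m : ℕ ↦ (m : ZMod p) ^ 2) '' S).ncard = p / 2 := by
  rw [image_natCast_sq_eq_image_Icc_half hIcc hS,
    (injOn_natCast_sq_Iic_half.mono Set.Icc_subset_Iic_self).ncard_image,
    ← Finset.coe_Icc, Set.ncard_coe_finset, Nat.card_Icc, Nat.add_sub_cancel]

theorem natCast_mul_sq_ne [Fact p.Prime] {a i j : ℕ} (ha : (a : ZMod p) ≠ 0) (hij : i < j)
    (hj : j ≤ p / 2) : ((i * a : ℕ) : ZMod p) ^ 2 ≠ ((j * a : ℕ) : ZMod p) ^ 2 := by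
  rw [Nat.cast_mul, Nat.cast_mul, mul_pow, mul_pow]
  intro hsq
  have hsq' : (i : ZMod p) ^ 2 = (j : ZMod p) ^ 2 := mul_right_cancel₀ (pow_ne_zero 2 ha) hsq
  exact hij.ne (injOn_natCast_sq_Iic_half (hij.le.trans hj) hj hsq')

end SquaresModP

theorem Icc_one_subset_Kcore (n : ℕ) : Set.Icc 1 n ⊆ Kcore n :=
  fun _ hm ↦ ⟨hm.1, fun _ _ hdvd ↦ (Nat.le_of_dvd hm.1 hdvd).trans hm.2⟩

theorem natCast_ne_zero_of_mem_Kcore {n p m : ℕ} (hp : p.Prime) (hnp : n < p) (hm : m ∈ Kcore n) :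
    (m : ZMod p) ≠ 0 :=
  fun h ↦ hnp.not_ge (hm.2 p hp ((ZMod.natCast_eq_zero_iff m p).mp h))

/-- If `p = 2n + 1` is prime, then `c(m) = m² mod p` is an `n`-satisfactory coloring
of `K_n`: it attains exactly `n` distinct values on `K_n`, and
`(i*a)² ≢ (j*a)² (mod p)` for `a ∈ K_n` and `1 ≤ i < j ≤ n`. -/
theorem squares_coloring_of_safe_prime (n : ℕ) (hn : 0 < n)
    (hp : Nat.Prime (2 * n + 1)) :
    Set.ncard {x : ZMod (2 * n + 1) | ∃ m ∈ Kcore n, (m : ZMod (2 * n + 1)) ^ 2 = x} = n ∧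
    ∀ a ∈ Kcore n, ∀ i j : ℕ, 1 ≤ i → i < j → j ≤ n →
      ((i * a : ℕ) : ZMod (2 * n + 1)) ^ 2 ≠ ((j * a : ℕ) : ZMod (2 * n + 1)) ^ 2 := by
  have : Fact (2 * n + 1).Prime := ⟨hp⟩
  have half_eq : (2 * n + 1) / 2 = n := by lia
  have core_ne_zero : ∀ a ∈ Kcore n, (a : ZMod (2 * n + 1)) ≠ 0 :=
    fun a ↦ natCast_ne_zero_of_mem_Kcore hp (by lia)
  constructor
  · have hIcc : Set.Icc 1 ((2 * n + 1) / 2) ⊆ Kcore n := half_eq.symm ▸ Icc_one_subset_Kcore n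
    exact (ncard_image_natCast_sq hIcc core_ne_zero).trans half_eq
  · intro a ha i j _ hij hj
    exact natCast_mul_sq_ne (core_ne_zero a ha) hij (hj.trans half_eq.ge)
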